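/- arXiv:1304.4477 — 8 statements merged into one kernel-verified Lean document; each statement's English description precedes it below -/
import Mathlib

section
/- Let n ≥ 1, let G be a real symmetric (n+1)×(n+1) matrix with last column g ∈ ℝ^{n+1}, and let J and K be disjoint subsets of {1,…,n}. Then there do not exist vectors a, b ∈ ℝ^n supported on J and vectors a', b' ∈ ℝ^n supported on K such that (a;1) + G(b;0) = 0 and (a';0) + G(b';0) = g simultaneously hold. (In the quantum secret sharing interpretation this says: if the group of players J can perfectly reconstruct the position quadrature of the teleported secret, then the disjoint group K cannot perfectly reconstruct the momentum quadrature, and vice versa.) -/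
open Matrix Finset

/-- Vectors supported on disjoint sets are orthogonal, also after appending a zero to the
first one and an arbitrary coordinate to the second one. -/
theorem snoc_zero_dotProduct_snoc_of_disjoint {n : ℕ} {J K : Finset (Fin n)}
    (hJK : Disjoint J K) {x y : Fin n → ℝ} (hx : ∀ l, l ∉ J → x l = 0)
    (hy : ∀ l, l ∉ K → y l = 0) (t : ℝ) :
    (Fin.snoc x 0 : Fin (n + 1) → ℝ) ⬝ᵥ (Fin.snoc y t : Fin (n + 1) → ℝ) = 0 := by
  simp only [dotProduct, Fin.sum_univ_castSucc, Fin.snoc_castSucc, Fin.snoc_last, zero_mul,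
    add_zero]
  refine Finset.sum_eq_zero fun l _ => ?_
  by_cases hl : l ∈ J
  · rw [hy l (Finset.disjoint_left.mp hJK hl), mul_zero]
  · rw [hx l hl, zero_mul]

/-- Let `n ≥ 1`, let `G` be a real symmetric `(n+1) × (n+1)` matrix with last
column `g`, and let `J` and `K` be disjoint subsets of `{1,…,n}`.  Then there do not exist vectors
`a, b ∈ ℝ^n` supported on `J` and vectors `a', b' ∈ ℝ^n` supported on `K` such that
`(a;1) + G(b;0) = 0` and `(a';0) + G(b';0) = g` simultaneously hold. -/
theorem stmt1 (n : ℕ) (hn : 1 ≤ n)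
    (G : Matrix (Fin (n + 1)) (Fin (n + 1)) ℝ) (hG : G.IsSymm)
    (J K : Finset (Fin n)) (hJK : Disjoint J K) :
    ¬ ∃ (a b a' b' : Fin n → ℝ),
      (∀ l, l ∉ J → a l = 0) ∧ (∀ l, l ∉ J → b l = 0) ∧
      (∀ l, l ∉ K → a' l = 0) ∧ (∀ l, l ∉ K → b' l = 0) ∧
      Fin.snoc a 1 + G.mulVec (Fin.snoc b 0) = 0 ∧
      Fin.snoc a' 0 + G.mulVec (Fin.snoc b' 0) = (fun i => G i (Fin.last n)) := by
  rintro ⟨a, b, a', b', ha, hb, ha', hb', hposition, hmomentum⟩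
  set B : Fin (n + 1) → ℝ := Fin.snoc b 0 with hB
  set B' : Fin (n + 1) → ℝ := Fin.snoc b' 0 with hB'
  have hlast : 1 + (G *ᵥ B) (Fin.last n) = 0 := by
    simpa using congrFun hposition (Fin.last n)
  have hcolumn : B ⬝ᵥ (fun i => G i (Fin.last n)) = (G *ᵥ B) (Fin.last n) := by
    rw [dotProduct_comm]
    simp only [mulVec, dotProduct, hG.apply]
  have hsymm : B ⬝ᵥ G *ᵥ B' = B' ⬝ᵥ G *ᵥ B := by
    rw [dotProduct_mulVec, ← mulVec_transpose, hG.eq, dotProduct_comm]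
  have hB'GB : B' ⬝ᵥ G *ᵥ B = 0 := by
    have h := congrArg (B' ⬝ᵥ ·) hposition
    simpa only [dotProduct_add, dotProduct_zero, hB',
      snoc_zero_dotProduct_snoc_of_disjoint hJK.symm hb' ha, zero_add] using h
  have hBGB' : B ⬝ᵥ G *ᵥ B' = (G *ᵥ B) (Fin.last n) := by
    have h := congrArg (B ⬝ᵥ ·) hmomentum
    simp only [dotProduct_add, hcolumn] at h
    rwa [hB, snoc_zero_dotProduct_snoc_of_disjoint hJK hb ha', zero_add] at h
  linarith
end

section
/- Let k and n be integers with 1 ≤ k ≤ n ≤ 2k−1 (equivalently n/2 < k ≤ n), and set m = 2k−1, N = {1,…,m}. Then there exist a real symmetric m×m matrix G with zero diagonal, a vector c ∈ ℝ^m, and a set S ⊆ N with |S| = n such that: (i) for every J ⊆ S with |J| = k there exist vectors a, b ∈ ℝ^m supported on J with a + Gb = 0 and b·c = 1; and (ii) for every J' ⊆ S with |J'| < k there exist no vectors a, b ∈ ℝ^m supported on J' with a + Gb = 0 and b·c = 1. (This is the linear-algebraic content of the statement that any (k,n) threshold protocol of the CPvtC quantum secret sharing scheme with n/2 < k ≤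 n can be implemented on a weighted continuous-variable graph state with infinite squeezing.) -/
open Matrix Finset

/-- A Cauchy matrix with at least as many rows as columns has trivial kernel. -/
lemma eq_zero_of_cauchy_sum_eq_zero {ι κ K : Type*} [Field K] (s : Finset ι) (t : Finset κ)
    (x v : ι → K) (y : κ → K) (hx : Set.InjOn x s) (hy : Set.InjOn y t) (hst : #s ≤ #t)
    (hxy : ∀ i ∈ s, ∀ j ∈ t, x i + y j ≠ 0)
    (hv : ∀ j ∈ t, ∑ i ∈ s, v i / (x i + y j) = 0) : ∀ i ∈ s, v i = 0 := by
  classical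
  intro i hi
  set P : Polynomial K := ∑ i ∈ s, Polynomial.C (v i) *
    ∏ l ∈ s.erase i, (Polynomial.X + Polynomial.C (x l)) with hP
  have hdeg : P.degree < #t := by
    refine lt_of_lt_of_le (b := (#s : WithBot ℕ)) ?_ (by exact_mod_cast hst)
    refine (Polynomial.degree_sum_le _ _).trans_lt ?_
    rw [Finset.sup_lt_iff (WithBot.bot_lt_coe _)]
    intro i hi
    rw [← Polynomial.smul_eq_C_mul]
    refine (Polynomial.degree_smul_le _ _).trans_lt ?_
    rw [Polynomial.degree_prod]
    simp only [Polynomial.degree_X_add_C, sum_const, nsmul_eq_mul, mul_one]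
    exact_mod_cast card_erase_lt_of_mem hi
  have hzero : P = 0 := by
    refine Polynomial.eq_zero_of_degree_lt_of_eval_index_eq_zero t hy hdeg fun j hj ↦ ?_
    have hfactor : P.eval (y j) = (∏ l ∈ s, (x l + y j)) * ∑ i ∈ s, v i / (x i + y j) := by
      rw [hP, Polynomial.eval_finsetSum, mul_sum]
      refine sum_congr rfl fun i hi ↦ ?_
      have hne := hxy i hi j hj
      rw [← mul_prod_erase s _ hi, Polynomial.eval_mul, Polynomial.eval_prod]
      simp only [Polynomial.eval_C, Polynomial.eval_add, Polynomial.eval_X, add_comm (y j)]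
      field_simp
    rw [hfactor, hv j hj, mul_zero]
  have heval : P.eval (-x i) = v i * ∏ l ∈ s.erase i, (-x i + x l) := by
    rw [hP, Polynomial.eval_finsetSum, sum_eq_single_of_mem i hi]
    · simp [Polynomial.eval_prod]
    · intro l _ hli
      rw [Polynomial.eval_mul, Polynomial.eval_prod,
        prod_eq_zero (mem_erase.2 ⟨hli.symm, hi⟩) (by simp), mul_zero]
  rw [hzero, Polynomial.eval_zero, eq_comm, mul_eq_zero] at heval
  refine heval.resolve_right (prod_ne_zero_iff.2 fun l hl h ↦ ?_)
  rw [mem_erase] at hl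
  exact hl.1 (hx hl.2 hi (by linear_combination h))

/-- The symmetric Cauchy matrix `1 / (i + j + 1)` (Hilbert matrix) with its diagonal removed. -/
noncomputable def hollowHilbert (m : ℕ) : Matrix (Fin m) (Fin m) ℝ :=
  fun i j ↦ if i = j then 0 else 1 / ((j : ℕ) + ((i : ℕ) + 1))

/-- The row following `hollowHilbert m` in the Hilbert matrix of size `m + 1`. -/
noncomputable def hilbertRow (m : ℕ) : Fin m → ℝ :=
  fun j ↦ 1 / ((j : ℕ) + ((m : ℕ) + 1))

lemma hollowHilbert_isSymm (m : ℕ) : (hollowHilbert m).IsSymm := by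
  ext i j
  simp only [hollowHilbert, transpose_apply, eq_comm (a := i)]
  congr 2
  ring

lemma hollowHilbert_mulVec_apply {m : ℕ} {J : Finset (Fin m)} {b : Fin m → ℝ}
    (hb : ∀ l, l ∉ J → b l = 0) {i : Fin m} (hi : i ∉ J) :
    (hollowHilbert m *ᵥ b) i = ∑ j ∈ J, b j / ((j : ℕ) + ((i : ℕ) + 1)) := by
  rw [mulVec, dotProduct, ← sum_subset (subset_univ J) fun j _ hj ↦ by rw [hb j hj, mul_zero]]
  refine sum_congr rfl fun j hj ↦ ?_
  rw [hollowHilbert, if_neg (by rintro rfl; exact hi hj), one_div_mul_eq_div]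

lemma dotProduct_hilbertRow {m : ℕ} {J : Finset (Fin m)} {b : Fin m → ℝ}
    (hb : ∀ l, l ∉ J → b l = 0) :
    b ⬝ᵥ hilbertRow m = ∑ j ∈ J, b j / ((j : ℕ) + ((m : ℕ) + 1)) := by
  rw [dotProduct, ← sum_subset (subset_univ J) fun j _ hj ↦ by rw [hb j hj, zero_mul]]
  exact sum_congr rfl fun j _ ↦ by rw [hilbertRow, mul_one_div]

lemma eq_zero_of_hilbert_sum_eq_zero {m : ℕ} {J : Finset (Fin m)} {b : Fin m → ℝ}
    (hb : ∀ l, l ∉ J → b l = 0) (t : Finset ℕ) (hJt : #J ≤ #t)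
    (h : ∀ i ∈ t, ∑ j ∈ J, b j / (((j : ℕ) : ℝ) + ((i : ℝ) + 1)) = 0) : b = 0 := by
  have hJ := eq_zero_of_cauchy_sum_eq_zero J t (fun j ↦ ((j : ℕ) : ℝ)) b (fun i ↦ (i : ℝ) + 1)
    (fun i _ j _ hij ↦ Fin.ext (Nat.cast_injective hij))
    (fun i _ j _ hij ↦ by simpa using hij) hJt (fun i _ j _ ↦ by positivity) h
  ext l
  by_cases hl : l ∈ J
  exacts [hJ l hl, hb l hl]

lemma eq_zero_of_hollowHilbert_mulVec {m : ℕ} {J : Finset (Fin m)} {b : Fin m → ℝ}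
    (hb : ∀ l, l ∉ J → b l = 0) (hJ : #J ≤ #Jᶜ)
    (h : ∀ l, l ∉ J → (hollowHilbert m *ᵥ b) l = 0) : b = 0 := by
  refine eq_zero_of_hilbert_sum_eq_zero hb (Jᶜ.map Fin.valEmbedding) (by simpa using hJ) ?_
  intro i hi
  obtain ⟨l, hl, rfl⟩ := mem_map.1 hi
  rw [mem_compl] at hl
  exact (hollowHilbert_mulVec_apply hb hl).symm.trans (h l hl)

lemma eq_zero_of_hollowHilbert_mulVec_of_dotProduct {m : ℕ} {J : Finset (Fin m)} {b : Fin m → ℝ}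
    (hb : ∀ l, l ∉ J → b l = 0) (hJ : #J ≤ #Jᶜ + 1)
    (h : ∀ l, l ∉ J → (hollowHilbert m *ᵥ b) l = 0) (hc : b ⬝ᵥ hilbertRow m = 0) : b = 0 := by
  have hm : m ∉ Jᶜ.map Fin.valEmbedding := by
    intro hm
    obtain ⟨l, -, hl⟩ := mem_map.1 hm
    exact l.isLt.ne hl
  refine eq_zero_of_hilbert_sum_eq_zero hb (insert m (Jᶜ.map Fin.valEmbedding))
    (by rwa [card_insert_of_notMem hm, card_map]) ?_
  intro i hi
  obtain rfl | hi := mem_insert.1 hi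
  · exact (dotProduct_hilbertRow hb).symm.trans hc
  · obtain ⟨l, hl, rfl⟩ := mem_map.1 hi
    rw [mem_compl] at hl
    exact (hollowHilbert_mulVec_apply hb hl).symm.trans (h l hl)

lemma exists_supported_hollowHilbert {m : ℕ} {J : Finset (Fin m)} (hJ : #J = #Jᶜ + 1) :
    ∃ b : Fin m → ℝ, (∀ l, l ∉ J → b l = 0) ∧
      (∀ l, l ∉ J → (hollowHilbert m *ᵥ b) l = 0) ∧ b ⬝ᵥ hilbertRow m = 1 := by
  let E : (J → ℝ) →ₗ[ℝ] (Fin m → ℝ) := Function.ExtendByZero.linearMap ℝ Subtype.val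
  have hE (v : J → ℝ) (l : Fin m) (hl : l ∉ J) : E v l = 0 :=
    Function.extend_apply' _ _ _ (by rintro ⟨j, rfl⟩; exact hl j.2)
  have hE_val (v : J → ℝ) (j : J) : E v j = v j :=
    Subtype.val_injective.extend_apply v 0 j
  let T : (J → ℝ) →ₗ[ℝ] (↥Jᶜ → ℝ) × ℝ :=
    (LinearMap.funLeft ℝ ℝ Subtype.val ∘ₗ (hollowHilbert m).mulVecLin ∘ₗ E).prod
      (dotProductBilin ℝ ℝ (hilbertRow m) ∘ₗ E)
  have hT_fst (v : J → ℝ) (l : ↥Jᶜ) : (T v).1 l = (hollowHilbert m *ᵥ E v) l := rfl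
  have hT_snd (v : J → ℝ) : (T v).2 = E v ⬝ᵥ hilbertRow m :=
    dotProduct_comm (hilbertRow m) (E v)
  have hinj : Function.Injective T := by
    refine (injective_iff_map_eq_zero T).2 fun v hv ↦ ?_
    have hEv : E v = 0 := by
      refine eq_zero_of_hollowHilbert_mulVec_of_dotProduct (hE v) hJ.le (fun l hl ↦ ?_) ?_
      · rw [← hT_fst v ⟨l, mem_compl.2 hl⟩, hv]
        rfl
      · rw [← hT_snd, hv]
        rfl
    ext j
    rw [← hE_val v j, hEv]
    rfl
  have hrank : Module.finrank ℝ (J → ℝ) = Module.finrank ℝ ((↥Jᶜ → ℝ) × ℝ) := by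
    rw [Module.finrank_prod, Module.finrank_fintype_fun_eq_card,
      Module.finrank_fintype_fun_eq_card, Module.finrank_self, Fintype.card_coe,
      Fintype.card_coe, hJ]
  obtain ⟨v, hv⟩ :=
    (LinearMap.injective_iff_surjective_of_finrank_eq_finrank hrank).1 hinj (0, 1)
  refine ⟨E v, hE v, fun l hl ↦ ?_, ?_⟩
  · rw [← hT_fst v ⟨l, mem_compl.2 hl⟩, hv]
    rfl
  · rw [← hT_snd, hv]

/-- Let `1 ≤ k ≤ n ≤ 2k − 1` and set `m = 2k − 1`.  Then there exist a real
symmetric `m × m` matrix `G` with zero diagonal, a vector `c ∈ ℝ^m`, and a set `S ⊆ {1,…,m}` with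
`|S| = n` such that: (i) every `J ⊆ S` with `|J| = k` admits vectors `a, b ∈ ℝ^m` supported on `J`
with `a + G b = 0` and `b ⬝ c = 1`; and (ii) no `J' ⊆ S` with `|J'| < k` admits such vectors. -/
theorem stmt2 (k n : ℕ) (hk : 1 ≤ k) (hkn : k ≤ n) (hn : n ≤ 2 * k - 1) :
    ∃ (G : Matrix (Fin (2 * k - 1)) (Fin (2 * k - 1)) ℝ) (c : Fin (2 * k - 1) → ℝ)
      (S : Finset (Fin (2 * k - 1))),
      G.IsSymm ∧ (∀ i, G i i = 0) ∧ S.card = n ∧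
      (∀ J ⊆ S, J.card = k →
        ∃ a b : Fin (2 * k - 1) → ℝ,
          (∀ l, l ∉ J → a l = 0) ∧ (∀ l, l ∉ J → b l = 0) ∧
          a + G.mulVec b = 0 ∧ b ⬝ᵥ c = 1) ∧
      (∀ J' ⊆ S, J'.card < k →
        ¬ ∃ a b : Fin (2 * k - 1) → ℝ,
          (∀ l, l ∉ J' → a l = 0) ∧ (∀ l, l ∉ J' → b l = 0) ∧
          a + G.mulVec b = 0 ∧ b ⬝ᵥ c = 1) := by
  obtain ⟨S, -, hS⟩ := exists_subset_card_eq (s := (univ : Finset (Fin (2 * k - 1)))) (n := n)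
    (by simpa using hn)
  refine ⟨hollowHilbert _, hilbertRow _, S, hollowHilbert_isSymm _,
    fun i ↦ by simp [hollowHilbert], hS, fun J _ hJ ↦ ?_, ?_⟩
  · obtain ⟨b, hb, hGb, hbc⟩ := exists_supported_hollowHilbert (J := J) (by
      rw [card_compl, Fintype.card_fin]
      omega)
    exact ⟨-(hollowHilbert _ *ᵥ b), b, fun l hl ↦ by rw [Pi.neg_apply, hGb l hl, neg_zero], hb,
      neg_add_cancel _, hbc⟩
  · rintro J _ hJ ⟨a, b, ha, hb, hab, hbc⟩
    have hb_zero : b = 0 := by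
      refine eq_zero_of_hollowHilbert_mulVec hb ?_ fun l hl ↦ ?_
      · rw [card_compl, Fintype.card_fin]
        omega
      · simpa [ha l hl] using congrFun hab l
    rw [hb_zero, zero_dotProduct] at hbc
    exact zero_ne_one hbc
end

section
/- Let G be a real symmetric n×n matrix, c ∈ ℝ^n, J' ⊆ {1,…,n}, and K' = {1,…,n}∖J'. If the rows of the submatrix G_{J',K'} are linearly independent, then there exist no vectors a, b ∈ ℝ^n supported on J' with a + Gb = 0 and b·c = 1. -/
open Matrix Finset

/-- Let `G` be a real symmetric `n × n` matrix, `c ∈ ℝ^n`, `J' ⊆ {1,…,n}`, and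
`K' = {1,…,n} ∖ J'`.  If the rows of the submatrix `G_{J',K'}` are linearly independent, then
there exist no vectors `a, b ∈ ℝ^n` supported on `J'` with `a + G b = 0` and `b ⬝ c = 1`. -/
theorem stmt3 (n : ℕ) (hn : 1 ≤ n)
    (G : Matrix (Fin n) (Fin n) ℝ) (hG : G.IsSymm)
    (c : Fin n → ℝ) (J' : Finset (Fin n))
    (hrows : LinearIndependent ℝ
      (fun j : {x // x ∈ J'} => fun i : {x // x ∈ J'ᶜ} => G j.1 i.1)) :
    ¬ ∃ a b : Fin n → ℝ,
      (∀ l, l ∉ J' → a l = 0) ∧ (∀ l, l ∉ J' → b l = 0) ∧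
      a + G.mulVec b = 0 ∧ b ⬝ᵥ c = 1 := by
  rintro ⟨a, b, ha, hb, hab, hbc⟩
  have hbJ : ∀ j : {x // x ∈ J'}, b j.1 = 0 := by
    refine Fintype.linearIndependent_iff.mp hrows (fun j => b j.1) ?_
    funext i
    have hi : i.1 ∉ J' := Finset.mem_compl.mp i.2
    have hGb : ∑ l, G i.1 l * b l = 0 := by
      have h := congrFun hab i.1
      simpa [ha _ hi, Matrix.mulVec, dotProduct] using h
    have hsum : ∑ l ∈ J', G i.1 l * b l = 0 := by
      rw [← hGb]
      exact Finset.sum_subset (Finset.subset_univ _) fun l _ hl => by rw [hb l hl, mul_zero]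
    rw [← Finset.sum_coe_sort] at hsum
    simp only [Finset.sum_apply, Pi.smul_apply, smul_eq_mul, Pi.zero_apply]
    rw [← hsum]
    exact Finset.sum_congr rfl fun j _ => by rw [hG.apply i.1 j.1, mul_comm]
  have hb0 : b = 0 := by
    funext l
    by_cases hl : l ∈ J'
    · exact hbJ ⟨l, hl⟩
    · exact hb l hl
  simp [hb0] at hbc
end

section
/- For every integer k ≥ 1, with M = {1,…,2k}, there exists a real symmetric 2k×2k matrix G with zero diagonal such that for every subset J ⊆ {1,…,2k−1} with |J| = k, the k×k submatrix G_{J, M∖J} is invertible. -/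
open Matrix Finset

/-- A Cauchy matrix `1 / (x i - y j)` with as many rows as columns has trivial kernel. -/
theorem cauchy_mulVec_eq_zero {K m n : Type*} [Field K] [Fintype m] [Fintype n]
    (hmn : Fintype.card m = Fintype.card n) {x : m → K} {y : n → K}
    (hx : Function.Injective x) (hy : Function.Injective y) (hxy : ∀ i j, x i ≠ y j)
    {v : n → K} (hv : (Matrix.of fun i j => (x i - y j)⁻¹) *ᵥ v = 0) : v = 0 := by
  classical
  let p : Polynomial K := ∑ j, Polynomial.C (v j) * Lagrange.nodal (univ.erase j) y
  have hp : p = 0 := by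
    cases isEmpty_or_nonempty n
    · simp [p]
    refine Polynomial.eq_zero_of_natDegree_lt_card_of_eval_eq_zero p hx (fun i => ?_) ?_
    · have hi : ∑ j, (x i - y j)⁻¹ * v j = 0 := congrFun hv i
      have hfactor : p.eval (x i) = (∏ j, (x i - y j)) * ∑ j, (x i - y j)⁻¹ * v j := by
        simp only [p, Polynomial.eval_finsetSum, Polynomial.eval_mul, Polynomial.eval_C,
          Lagrange.eval_nodal, mul_sum]
        refine sum_congr rfl fun j _ => ?_
        have hne : x i - y j ≠ 0 := sub_ne_zero.2 (hxy i j)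
        rw [← mul_prod_erase univ _ (mem_univ j)]
        field_simp
      rw [hfactor, hi, mul_zero]
    · have hdeg : p.natDegree ≤ Fintype.card n - 1 := by
        refine Polynomial.natDegree_sum_le_of_forall_le _ _ fun j _ => ?_
        refine (Polynomial.natDegree_C_mul_le _ _).trans ?_
        simp [Lagrange.natDegree_nodal]
      have : 0 < Fintype.card n := Fintype.card_pos
      omega
  funext j
  have hj : p.eval (y j) = 0 := by simp [hp]
  rw [Polynomial.eval_finsetSum, sum_eq_single j, Polynomial.eval_mul, Polynomial.eval_C] at hj
  · refine (mul_eq_zero.1 hj).resolve_right ?_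
    rw [Lagrange.eval_nodal, ← ne_eq, prod_ne_zero_iff]
    exact fun l hl => sub_ne_zero.2 fun h => (ne_of_mem_erase hl) (hy h).symm
  · intro l _ hl
    rw [Polynomial.eval_mul, Lagrange.eval_nodal_at_node (mem_erase.2 ⟨hl.symm, mem_univ j⟩),
      mul_zero]
  · simp

/-- A matrix with trivial kernel and as many rows as columns has a two-sided inverse. -/
theorem exists_two_sided_inverse_of_mulVec_eq_zero {K m n : Type*} [Field K]
    [Fintype m] [Fintype n] [DecidableEq m] [DecidableEq n]
    (hmn : Fintype.card m = Fintype.card n) (A : Matrix m n K)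
    (hA : ∀ v, A *ᵥ v = 0 → v = 0) : ∃ B : Matrix n m K, A * B = 1 ∧ B * A = 1 := by
  obtain ⟨g, hg⟩ := (Matrix.toLin' A).exists_leftInverse_of_injective
    (LinearMap.ker_eq_bot'.2 hA)
  have hBA : LinearMap.toMatrix' g * A = 1 := by
    rw [← LinearMap.toMatrix'_toLin' A, ← LinearMap.toMatrix'_comp, hg, LinearMap.toMatrix'_id]
  exact ⟨_, (mul_eq_one_comm_of_card_eq _ _ _ hmn).2 hBA, hBA⟩


/-- For every integer `k ≥ 1`, with `M = {1,…,2k}`, there exists a real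
symmetric `2k × 2k` matrix `G` with zero diagonal such that for every subset `J ⊆ {1,…,2k−1}`
with `|J| = k`, the `k × k` submatrix `G_{J, M∖J}` is invertible. -/
theorem stmt5 (k : ℕ) (hk : 1 ≤ k) :
    ∃ G : Matrix (Fin (2 * k)) (Fin (2 * k)) ℝ,
      G.IsSymm ∧ (∀ i, G i i = 0) ∧
      ∀ J : Finset (Fin (2 * k)), (∀ j ∈ J, (j : ℕ) < 2 * k - 1) → J.card = k →
        ∃ B : Matrix {x // x ∈ Jᶜ} {x // x ∈ J} ℝ,
          (Matrix.of fun (j : {x // x ∈ J}) (i : {x // x ∈ Jᶜ}) => G j.1 i.1) * B = 1 ∧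
          B * (Matrix.of fun (j : {x // x ∈ J}) (i : {x // x ∈ Jᶜ}) => G j.1 i.1) = 1 := by
  refine ⟨Matrix.of fun i j => if i = j then 0 else ((i : ℝ) - (-(j : ℝ) - 1))⁻¹, ?_, ?_, ?_⟩
  · ext i j
    simp only [transpose_apply, of_apply, eq_comm (a := j)]
    congr 2
    ring
  · simp
  · intro J _ hJ
    have hcard : Fintype.card {x // x ∈ J} = Fintype.card {x // x ∈ Jᶜ} := by
      rw [Fintype.card_coe, Fintype.card_coe, card_compl, Fintype.card_fin]
      omega
    refine exists_two_sided_inverse_of_mulVec_eq_zero hcard _ fun v hv => ?_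
    refine cauchy_mulVec_eq_zero hcard (x := fun j : {x // x ∈ J} => ((j : Fin (2 * k)) : ℝ))
      (y := fun i : {x // x ∈ Jᶜ} => -((i : Fin (2 * k)) : ℝ) - 1) ?_ ?_ ?_ ?_
    · intro a b hab
      exact Subtype.ext (Fin.ext (Nat.cast_injective hab))
    · intro a b hab
      have : (((a : Fin (2 * k)) : ℕ) : ℝ) = ((b : Fin (2 * k)) : ℕ) := by
        simpa using hab
      exact Subtype.ext (Fin.ext (Nat.cast_injective this))
    · intro a b
      have ha : (0 : ℝ) ≤ ((a : Fin (2 * k)) : ℕ) := Nat.cast_nonneg _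
      have hb : (0 : ℝ) ≤ ((b : Fin (2 * k)) : ℕ) := Nat.cast_nonneg _
      intro hab
      linarith
    · rw [← hv]
      congr 1
      ext a b
      have hne : (a : Fin (2 * k)) ≠ b := fun h => mem_compl.1 b.2 (h ▸ a.2)
      simp [hne]
end

section
/- Let k ≥ 1, n = 2k−1, and M = {1,…,2k}. Let G be a real symmetric 2k×2k matrix with last column g ∈ ℝ^{2k}, and let J ⊆ {1,…,n} with |J| = k. If the k×k submatrix G_{J,M∖J} is invertible, then there exist vectors a, b ∈ ℝ^n supported on J with (a;1) + G(b;0) = 0, and there exist vectors a', b' ∈ ℝ^n supported on J with (a';0) + G(b';0) = g. -/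
open Matrix Finset

/-- If the submatrix of a symmetric matrix `G` with rows in `J` and columns outside `J` has a left
inverse, then `(a;t) + G(b;0) = w` is solvable with `a` and `b` supported on `J`, for every
`t` and `w`. -/
theorem exists_supported_snoc_add_mulVec_eq {R : Type*} [CommRing R] {n : ℕ}
    {G : Matrix (Fin (n + 1)) (Fin (n + 1)) R} (hG : G.IsSymm) {J : Finset (Fin n)}
    {B : Matrix {x // x ∈ (J.image Fin.castSucc)ᶜ} {x // x ∈ J} R}
    (hB : B * (Matrix.of fun (j : {x // x ∈ J}) (i : {x // x ∈ (J.image Fin.castSucc)ᶜ}) =>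
        G j.1.castSucc i.1) = 1)
    (t : R) (w : Fin (n + 1) → R) :
    ∃ a b : Fin n → R, (∀ l, l ∉ J → a l = 0) ∧ (∀ l, l ∉ J → b l = 0) ∧
      Fin.snoc a t + G.mulVec (Fin.snoc b 0) = w := by
  set v : Fin (n + 1) → R := w - Pi.single (Fin.last n) t with hv
  set c : {x // x ∈ J} → R := (fun i => v i.1) ᵥ* B with hc
  set b : Fin n → R := fun l => if h : l ∈ J then c ⟨l, h⟩ else 0 with hb
  have hmul : ∀ i, (G *ᵥ Fin.snoc b 0) i = ∑ j : {x // x ∈ J}, c j * G j.1.castSucc i := by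
    intro i
    have hsum : (G *ᵥ Fin.snoc b 0) i = ∑ l, G i l.castSucc * b l := by
      simp [mulVec, dotProduct, Fin.sum_univ_castSucc]
    rw [hsum, ← Finset.sum_subset (Finset.subset_univ J) (fun l _ hl => by simp [hb, hl]),
      ← Finset.sum_coe_sort J]
    refine Finset.sum_congr rfl fun j _ => ?_
    simp [hb, hG.apply, mul_comm]
  have hout : ∀ i, i ∉ J.image Fin.castSucc → (G *ᵥ Fin.snoc b 0) i = v i := by
    intro i hi
    have hcA : c ᵥ* (Matrix.of fun (j : {x // x ∈ J})
        (i : {x // x ∈ (J.image Fin.castSucc)ᶜ}) => G j.1.castSucc i.1) = fun i => v i.1 := by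
      rw [hc, vecMul_vecMul, hB, vecMul_one]
    rw [hmul]
    exact congrFun hcA ⟨i, Finset.mem_compl.2 hi⟩
  refine ⟨fun l => w l.castSucc - (G *ᵥ Fin.snoc b 0) l.castSucc, b, fun l hl => ?_,
    fun l hl => by simp [hb, hl], ?_⟩
  · beta_reduce
    rw [hout l.castSucc (by simpa using hl)]
    simp [hv, (Fin.castSucc_lt_last l).ne]
  · ext i
    refine Fin.lastCases ?_ (fun l => ?_) i
    · rw [Pi.add_apply, hout _ (by simp [(Fin.castSucc_lt_last _).ne])]
      simp [hv]
    · simp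

/-- Let `k ≥ 1`, `n = 2k − 1`, and `M = {1,…,2k}`.  Let `G` be a real symmetric
`2k × 2k` matrix with last column `g`, and let `J ⊆ {1,…,n}` with `|J| = k`.  If the `k × k`
submatrix `G_{J, M∖J}` is invertible, then there exist vectors `a, b ∈ ℝ^n` supported on `J` with
`(a;1) + G(b;0) = 0`, and there exist vectors `a', b' ∈ ℝ^n` supported on `J` with
`(a';0) + G(b';0) = g`. -/
theorem stmt6 (k n : ℕ) (hk : 1 ≤ k) (hn : n = 2 * k - 1)
    (G : Matrix (Fin (n + 1)) (Fin (n + 1)) ℝ) (hG : G.IsSymm)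
    (J : Finset (Fin n)) (hJ : J.card = k)
    (hinv : ∃ B : Matrix {x // x ∈ (J.image Fin.castSucc)ᶜ} {x // x ∈ J} ℝ,
      (Matrix.of fun (j : {x // x ∈ J}) (i : {x // x ∈ (J.image Fin.castSucc)ᶜ}) =>
          G j.1.castSucc i.1) * B = 1 ∧
      B * (Matrix.of fun (j : {x // x ∈ J}) (i : {x // x ∈ (J.image Fin.castSucc)ᶜ}) =>
          G j.1.castSucc i.1) = 1) :
    (∃ a b : Fin n → ℝ,
        (∀ l, l ∉ J → a l = 0) ∧ (∀ l, l ∉ J → b l = 0) ∧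
        Fin.snoc a 1 + G.mulVec (Fin.snoc b 0) = 0) ∧
    (∃ a' b' : Fin n → ℝ,
        (∀ l, l ∉ J → a' l = 0) ∧ (∀ l, l ∉ J → b' l = 0) ∧
        Fin.snoc a' 0 + G.mulVec (Fin.snoc b' 0) = (fun i => G i (Fin.last n))) := by
  obtain ⟨B, -, hB⟩ := hinv
  exact ⟨exists_supported_snoc_add_mulVec_eq hG hB 1 0,
    exists_supported_snoc_add_mulVec_eq hG hB 0 _⟩
end

section
/- Let n ≥ 1, let G be a real symmetric (n+1)×(n+1) matrix with last column g ∈ ℝ^{n+1}, and let J and K be disjoint subsets of {1,…,n}. Suppose that there exist a, b ∈ ℝ^n supported on J with (a;1) + G(b;0) = 0 and there exist a', b' ∈ ℝ^n supported on J with (a';0) + G(b';0) = g (i.e. the player group J can perfectly reconstruct both quadratures of the quantum secret). Then there exist no vectors a, b ∈ ℝ^n supported on K with (a;1) + G(b;0) = 0, and there exist no vectors a', b' ∈ ℝ^n supported on K with (a';0) + G(b';0) = g (i.e. the disjoint group K can perfectly reconstruct neither quadrature, and hence obtains no information about the secret). -/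
open Matrix Finset

/-- Two groups with disjoint supports cannot reconstruct conjugate quadratures: pairing the two
reconstruction identities through the symmetric form `G` would give `1 = 0`. -/
lemma not_reconstruct_conjugate_of_disjoint {n : ℕ}
    {G : Matrix (Fin (n + 1)) (Fin (n + 1)) ℝ} (hG : G.IsSymm)
    {J K : Finset (Fin n)} (hJK : Disjoint J K) {a b a' b' : Fin n → ℝ}
    (ha : ∀ l, l ∉ J → a l = 0) (hb : ∀ l, l ∉ J → b l = 0)
    (hx : Fin.snoc a 1 + G.mulVec (Fin.snoc b 0) = 0)
    (ha' : ∀ l, l ∉ K → a' l = 0) (hb' : ∀ l, l ∉ K → b' l = 0)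
    (hp : Fin.snoc a' 0 + G.mulVec (Fin.snoc b' 0) = (fun i => G i (Fin.last n))) :
    False := by
  have dot_eq_zero {u v : Fin n → ℝ} (hu : ∀ l, l ∉ J → u l = 0)
      (hv : ∀ l, l ∉ K → v l = 0) : ∑ l, u l * v l = 0 := by
    refine Finset.sum_eq_zero fun l _ => ?_
    by_cases hl : l ∈ J
    · rw [hv l (Finset.disjoint_left.mp hJK hl), mul_zero]
    · rw [hu l hl, zero_mul]
  have dot_snoc (u v : Fin n → ℝ) (t : ℝ) :
      (Fin.snoc u t : Fin (n + 1) → ℝ) ⬝ᵥ Fin.snoc v 0 = ∑ l, u l * v l := by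
    simp [dotProduct, Fin.sum_univ_castSucc]
  have hsymm : G *ᵥ (Fin.snoc b 0) ⬝ᵥ Fin.snoc b' 0 = G *ᵥ (Fin.snoc b' 0) ⬝ᵥ Fin.snoc b 0 := by
    rw [dotProduct_comm, dotProduct_mulVec, ← mulVec_transpose, hG.eq]
  have hcol : (fun i => G i (Fin.last n)) ⬝ᵥ Fin.snoc b 0 = (G *ᵥ (Fin.snoc b 0)) (Fin.last n) := by
    simp only [mulVec, dotProduct, hG.apply]
  have hlast := congrFun hx (Fin.last n)
  have hxb' := congrArg (· ⬝ᵥ (Fin.snoc b' 0 : Fin (n + 1) → ℝ)) hx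
  have hpb := congrArg (· ⬝ᵥ (Fin.snoc b 0 : Fin (n + 1) → ℝ)) hp
  simp only [add_dotProduct, dot_snoc, zero_dotProduct, dot_eq_zero ha hb'] at hxb'
  have hba : ∑ l, a' l * b l = 0 := by simpa only [mul_comm] using dot_eq_zero hb ha'
  simp only [add_dotProduct, dot_snoc, hba, hcol] at hpb
  simp only [Pi.add_apply, Fin.snoc_last, Pi.zero_apply] at hlast
  linarith

/-- Let `n ≥ 1`, let `G` be a real symmetric `(n+1) × (n+1)` matrix with last
column `g`, and let `J` and `K` be disjoint subsets of `{1,…,n}`.  Suppose the player group `J`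
can perfectly reconstruct both quadratures of the quantum secret, i.e. there exist `a, b ∈ ℝ^n`
supported on `J` with `(a;1) + G(b;0) = 0` and there exist `a', b' ∈ ℝ^n` supported on `J` with
`(a';0) + G(b';0) = g`.  Then the disjoint group `K` can reconstruct neither quadrature: there
are no `a, b ∈ ℝ^n` supported on `K` with `(a;1) + G(b;0) = 0`, and no `a', b' ∈ ℝ^n` supported
on `K` with `(a';0) + G(b';0) = g`. -/
theorem stmt15 (n : ℕ) (hn : 1 ≤ n)
    (G : Matrix (Fin (n + 1)) (Fin (n + 1)) ℝ) (hG : G.IsSymm)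
    (J K : Finset (Fin n)) (hJK : Disjoint J K)
    (hx : ∃ a b : Fin n → ℝ,
      (∀ l, l ∉ J → a l = 0) ∧ (∀ l, l ∉ J → b l = 0) ∧
      Fin.snoc a 1 + G.mulVec (Fin.snoc b 0) = 0)
    (hp : ∃ a' b' : Fin n → ℝ,
      (∀ l, l ∉ J → a' l = 0) ∧ (∀ l, l ∉ J → b' l = 0) ∧
      Fin.snoc a' 0 + G.mulVec (Fin.snoc b' 0) = (fun i => G i (Fin.last n))) :
    (¬ ∃ a b : Fin n → ℝ,
      (∀ l, l ∉ K → a l = 0) ∧ (∀ l, l ∉ K → b l = 0) ∧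
      Fin.snoc a 1 + G.mulVec (Fin.snoc b 0) = 0) ∧
    (¬ ∃ a' b' : Fin n → ℝ,
      (∀ l, l ∉ K → a' l = 0) ∧ (∀ l, l ∉ K → b' l = 0) ∧
      Fin.snoc a' 0 + G.mulVec (Fin.snoc b' 0) = (fun i => G i (Fin.last n))) := by
  obtain ⟨a, b, ha, hb, hab⟩ := hx
  obtain ⟨a', b', ha', hb', hab'⟩ := hp
  constructor
  · rintro ⟨c, d, hc, hd, hcd⟩
    exact not_reconstruct_conjugate_of_disjoint hG hJK.symm hc hd hcd ha' hb' hab'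
  · rintro ⟨c, d, hc, hd, hcd⟩
    exact not_reconstruct_conjugate_of_disjoint hG hJK ha hb hab hc hd hcd
end

section
/- For every integer k ≥ 1, set N = {1,…,2k−1}. There exists a real symmetric 2k×2k matrix G with zero diagonal and last column g ∈ ℝ^{2k} such that: (i) for every J ⊆ N with |J| = k, there exist a, b ∈ ℝ^{2k−1} supported on J with (a;1) + G(b;0) = 0, and there exist a', b' ∈ ℝ^{2k−1} supported on J with (a';0) + G(b';0) = g; and (ii) for every J' ⊆ N with |J'| < k, there exist no a, b ∈ ℝ^{2k−1} supported on J' with (a;1) + G(b;0) = 0 and no a', b' ∈ ℝ^{2k−1} supported on J' with (a';0) + G(b';0) = g. (This is the linear-algebraic content of the statement that any (k, 2k−1) threshold protocol of the QPvtQ quantum secret sharing scheme can be implemented with a weighted continuous-variable graph state of infinite squeezing, with groups of fewer than k players obtaining no information.) -/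
open Matrix Finset

open Polynomial in
/-- A linear combination of the shifted powers `(X + y q) ^ (k - 1)` at `k` distinct shifts is a
polynomial of degree less than `k`; if it vanishes at `k` distinct points, it is trivial. -/
lemma eq_zero_of_sum_add_pow_mul_eq_zero {k : ℕ} {x y v : Fin k → ℝ}
    (hx : Function.Injective x) (hy : Function.Injective y)
    (h : ∀ p, ∑ q, (x p + y q) ^ (k - 1) * v q = 0) : v = 0 := by
  have hpoly : ∑ q, (X + C (y q)) ^ (k - 1) * C (v q) = 0 := by
    rcases Nat.eq_zero_or_pos k with rfl | hk
    · simp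
    refine eq_zero_of_degree_lt_of_eval_index_eq_zero (v := x) Finset.univ hx.injOn ?_ ?_
    · refine (degree_sum_le _ _).trans_lt ?_
      refine (Finset.sup_lt_iff (by simp)).2 fun q _ => ?_
      refine (degree_mul_le _ _).trans_lt ?_
      calc ((X + C (y q)) ^ (k - 1)).degree + (C (v q)).degree
          ≤ ((k - 1 : ℕ) : WithBot ℕ) + 0 := by
            refine add_le_add (degree_pow_le_of_le (k - 1) (degree_X_add_C _).le |>.trans ?_)
              degree_C_le
            simp
        _ < _ := by
            rw [add_zero, Finset.card_univ, Fintype.card_fin]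
            exact_mod_cast Nat.sub_lt hk one_pos
    · intro p _
      simpa [eval_finsetSum] using h p
  refine eq_zero_of_forall_pow_sum_mul_pow_eq_zero hy fun i => ?_
  have hcoeff := congrArg (fun p => p.coeff (k - 1 - i)) hpoly
  have hi : k - 1 - (k - 1 - (i : ℕ)) = i := by omega
  have hchoose : ((k - 1).choose (k - 1 - i) : ℝ) ≠ 0 :=
    Nat.cast_ne_zero.2 (Nat.choose_pos (Nat.sub_le _ _)).ne'
  simp only [finsetSum_coeff, coeff_mul_C, coeff_X_add_C_pow, hi, coeff_zero] at hcoeff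
  refine (mul_eq_zero.1 (?_ : ((k - 1).choose (k - 1 - i) : ℝ) * _ = 0)).resolve_left hchoose
  rw [Finset.mul_sum, ← hcoeff]
  exact Finset.sum_congr rfl fun q _ => by ring

/-- The symmetric matrix with zero diagonal and off-diagonal entries `(i + j) ^ (k - 1)`. -/
def powSumGraph (k m : ℕ) : Matrix (Fin m) (Fin m) ℝ :=
  Matrix.of fun i j => if i = j then 0 else ((i : ℝ) + (j : ℝ)) ^ (k - 1)

lemma powSumGraph_isSymm (k m : ℕ) : (powSumGraph k m).IsSymm := by
  ext i j
  simp [powSumGraph, eq_comm, add_comm]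

lemma mulVec_apply_eq_sum_of_support {m : ℕ} (G : Matrix (Fin m) (Fin m) ℝ)
    {T : Finset (Fin m)} {v : Fin m → ℝ} (hv : ∀ j ∉ T, v j = 0) (i : Fin m) :
    (G *ᵥ v) i = ∑ j : T, G i j * v j := by
  rw [Finset.sum_coe_sort T fun j => G i j * v j]
  exact (Finset.sum_subset (Finset.subset_univ T) fun j _ hj => by rw [hv j hj, mul_zero]).symm

/-- Square blocks of size `k` of `powSumGraph k m` on disjoint rows and columns have trivial
kernel. -/
lemma powSumGraph_eq_zero_of_mulVec {k m : ℕ} {S T : Finset (Fin m)} (hST : Disjoint S T)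
    (hS : S.card = k) (hT : T.card = k) {v : Fin m → ℝ} (hv : ∀ j ∉ T, v j = 0)
    (h : ∀ i ∈ S, (powSumGraph k m *ᵥ v) i = 0) : v = 0 := by
  let f := S.orderIsoOfFin hS
  let g := T.orderIsoOfFin hT
  have hinj {U : Finset (Fin m)} (e : Fin k ≃o U) :
      Function.Injective fun p => (((e p : Fin m) : ℕ) : ℝ) := fun p q hpq =>
    e.injective (Subtype.ext (Fin.ext (Nat.cast_injective hpq)))
  have key : (fun q => v (g q)) = 0 := by
    refine eq_zero_of_sum_add_pow_mul_eq_zero (hinj f) (hinj g) fun p => ?_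
    rw [← h (f p) (f p).2, mulVec_apply_eq_sum_of_support _ hv,
      ← Equiv.sum_comp g.toEquiv fun j : T => powSumGraph k m (f p) j * v j]
    refine Finset.sum_congr rfl fun q _ => ?_
    have hne : (f p : Fin m) ≠ g q := Finset.disjoint_iff_ne.1 hST _ (f p).2 _ (g q).2
    simp [powSumGraph, hne]
  funext j
  by_cases hj : j ∈ T
  · simpa using congrFun key (g.symm ⟨j, hj⟩)
  · exact hv j hj

/-- Square blocks of size `k` of `powSumGraph k m` on disjoint rows and columns are surjective. -/
lemma powSumGraph_exists_mulVec_eq {k m : ℕ} {S T : Finset (Fin m)} (hST : Disjoint S T)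
    (hS : S.card = k) (hT : T.card = k) (c : Fin m → ℝ) :
    ∃ v : Fin m → ℝ, (∀ j ∉ T, v j = 0) ∧ ∀ i ∈ S, (powSumGraph k m *ᵥ v) i = c i := by
  let ext (w : T → ℝ) : Fin m → ℝ := fun j => if hj : j ∈ T then w ⟨j, hj⟩ else 0
  have hext (w : T → ℝ) : ∀ j ∉ T, ext w j = 0 := fun j hj => dif_neg hj
  let A : Matrix S T ℝ := (powSumGraph k m).submatrix (↑) (↑)
  have hA (w : T → ℝ) (i : S) : (powSumGraph k m *ᵥ ext w) i = (A *ᵥ w) i := by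
    rw [mulVec_apply_eq_sum_of_support _ (hext w)]
    exact Finset.sum_congr rfl fun j _ => by simp [A, ext]
  have hinj : Function.Injective A.mulVecLin := by
    refine (injective_iff_map_eq_zero _).2 fun w hw => ?_
    have h0 : ext w = 0 := powSumGraph_eq_zero_of_mulVec hST hS hT (hext w) fun i hi =>
      (hA w ⟨i, hi⟩).trans (congrFun hw ⟨i, hi⟩)
    funext j
    simpa [ext] using congrFun h0 j
  have hsurj : Function.Surjective A.mulVecLin :=
    (LinearMap.injective_iff_surjective_of_finrank_eq_finrank (by simp [hS, hT])).1 hinj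
  obtain ⟨w, hw⟩ := hsurj fun i => c i
  exact ⟨ext w, hext w, fun i hi => (hA w ⟨i, hi⟩).trans (congrFun hw ⟨i, hi⟩)⟩

/-- A set of `k` players can solve `(a;t) + G(b;0) = d` for every right-hand side. -/
lemma powSumGraph_exists_snoc_add_eq {k n : ℕ} (hn : n + 1 = 2 * k) {J : Finset (Fin n)}
    (hJ : J.card = k) (t : ℝ) (d : Fin (n + 1) → ℝ) :
    ∃ a b : Fin n → ℝ, (∀ l, l ∉ J → a l = 0) ∧ (∀ l, l ∉ J → b l = 0) ∧
      Fin.snoc a t + (powSumGraph k (n + 1)).mulVec (Fin.snoc b 0) = d := by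
  set T : Finset (Fin (n + 1)) := J.map Fin.castSuccEmb with hTdef
  have hT : T.card = k := by rw [hTdef, Finset.card_map, hJ]
  have hmem (l : Fin n) : l.castSucc ∈ T ↔ l ∈ J := Finset.mem_map' Fin.castSuccEmb
  have hlast : Fin.last n ∉ T := by simp [hTdef, Fin.castSucc_ne_last]
  obtain ⟨v, hv, hGv⟩ := powSumGraph_exists_mulVec_eq (disjoint_compl_left (a := T))
    (by rw [Finset.card_compl, hT, Fintype.card_fin]; omega) hT
    (d - Fin.snoc (0 : Fin n → ℝ) t)
  have hsnoc : (Fin.snoc (fun l => v l.castSucc) 0 : Fin (n + 1) → ℝ) = v := by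
    funext i
    refine Fin.lastCases ?_ (fun l => ?_) i
    · simp [hv _ hlast]
    · simp
  refine ⟨fun l => d l.castSucc - (powSumGraph k (n + 1) *ᵥ v) l.castSucc,
    fun l => v l.castSucc, fun l hl => ?_, fun l hl => hv _ (mt (hmem l).1 hl), ?_⟩
  · have := hGv l.castSucc (Finset.mem_compl.2 (mt (hmem l).1 hl))
    simp [this]
  · rw [hsnoc]
    funext i
    refine Fin.lastCases ?_ (fun l => ?_) i
    · simp [hGv _ (Finset.mem_compl.2 hlast)]
    · simp

/-- Fewer than `k` players only have the trivial solution of `(a;t) + G(b;s) = 0`. -/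
lemma powSumGraph_snoc_add_eq_zero {k n : ℕ} (hn : n + 1 = 2 * k) {J : Finset (Fin n)}
    (hJ : J.card < k) {a b : Fin n → ℝ} (ha : ∀ l, l ∉ J → a l = 0) (hb : ∀ l, l ∉ J → b l = 0)
    {s t : ℝ} (h : Fin.snoc a t + (powSumGraph k (n + 1)).mulVec (Fin.snoc b s) = 0) :
    s = 0 ∧ t = 0 := by
  obtain ⟨J₁, hJJ₁, -, hJ₁⟩ := Finset.exists_subsuperset_card_eq (Finset.subset_univ J)
    (show J.card ≤ k - 1 by omega) (by rw [Finset.card_univ, Fintype.card_fin]; omega)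
  have hlast : Fin.last n ∉ J₁.map Fin.castSuccEmb := by simp [Fin.castSucc_ne_last]
  set T : Finset (Fin (n + 1)) := insert (Fin.last n) (J₁.map Fin.castSuccEmb) with hTdef
  have hT : T.card = k := by
    rw [hTdef, Finset.card_insert_of_notMem hlast, Finset.card_map, hJ₁]
    omega
  have hJT (l : Fin n) (hl : l.castSucc ∉ T) : l ∉ J := fun hlJ =>
    hl (Finset.mem_insert_of_mem (Finset.mem_map_of_mem Fin.castSuccEmb (hJJ₁ hlJ)))
  have hTlast : Fin.last n ∈ T := Finset.mem_insert_self _ _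
  have hv : (Fin.snoc b s : Fin (n + 1) → ℝ) = 0 := by
    refine powSumGraph_eq_zero_of_mulVec (disjoint_compl_left (a := T))
      (by rw [Finset.card_compl, hT, Fintype.card_fin]; omega) hT (fun i => ?_) fun i hi => ?_
    · refine Fin.lastCases (fun hi => absurd hTlast hi) (fun l hl => ?_) i
      simpa using hb l (hJT l hl)
    · revert hi
      refine Fin.lastCases (fun hi => absurd hTlast (Finset.mem_compl.1 hi)) (fun l hl => ?_) i
      simpa [ha l (hJT l (Finset.mem_compl.1 hl))] using congrFun h l.castSucc
  rw [hv, mulVec_zero, add_zero] at h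
  exact ⟨by simpa using congrFun hv (Fin.last n), by simpa using congrFun h (Fin.last n)⟩

/-- For every integer `k ≥ 1`, with `n = 2k − 1` and `N = {1,…,n}`, there
exists a real symmetric `2k × 2k` matrix `G` with zero diagonal and last column `g` such that:
(i) every `J ⊆ N` with `|J| = k` admits `a, b ∈ ℝ^n` supported on `J` with
`(a;1) + G(b;0) = 0` and `a', b' ∈ ℝ^n` supported on `J` with `(a';0) + G(b';0) = g`; and
(ii) no `J' ⊆ N` with `|J'| < k` admits `a, b` supported on `J'` with `(a;1) + G(b;0) = 0`,
and no such `J'` admits `a', b'` supported on `J'` with `(a';0) + G(b';0) = g`. -/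
theorem stmt16 (k n : ℕ) (hk : 1 ≤ k) (hn : n = 2 * k - 1) :
    ∃ G : Matrix (Fin (n + 1)) (Fin (n + 1)) ℝ,
      G.IsSymm ∧ (∀ i, G i i = 0) ∧
      (∀ J : Finset (Fin n), J.card = k →
        (∃ a b : Fin n → ℝ,
          (∀ l, l ∉ J → a l = 0) ∧ (∀ l, l ∉ J → b l = 0) ∧
          Fin.snoc a 1 + G.mulVec (Fin.snoc b 0) = 0) ∧
        (∃ a' b' : Fin n → ℝ,
          (∀ l, l ∉ J → a' l = 0) ∧ (∀ l, l ∉ J → b' l = 0) ∧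
          Fin.snoc a' 0 + G.mulVec (Fin.snoc b' 0) = (fun i => G i (Fin.last n)))) ∧
      (∀ J' : Finset (Fin n), J'.card < k →
        (¬ ∃ a b : Fin n → ℝ,
          (∀ l, l ∉ J' → a l = 0) ∧ (∀ l, l ∉ J' → b l = 0) ∧
          Fin.snoc a 1 + G.mulVec (Fin.snoc b 0) = 0) ∧
        (¬ ∃ a' b' : Fin n → ℝ,
          (∀ l, l ∉ J' → a' l = 0) ∧ (∀ l, l ∉ J' → b' l = 0) ∧
          Fin.snoc a' 0 + G.mulVec (Fin.snoc b' 0) = (fun i => G i (Fin.last n)))) := by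
  have hn' : n + 1 = 2 * k := by omega
  refine ⟨powSumGraph k (n + 1), powSumGraph_isSymm _ _, fun i => by simp [powSumGraph],
    fun J hJ => ⟨powSumGraph_exists_snoc_add_eq hn' hJ 1 0,
      powSumGraph_exists_snoc_add_eq hn' hJ 0 _⟩, fun J hJ => ⟨?_, ?_⟩⟩
  · rintro ⟨a, b, ha, hb, h⟩
    exact one_ne_zero (powSumGraph_snoc_add_eq_zero hn' hJ ha hb h).2
  · rintro ⟨a, b, ha, hb, h⟩
    have hsnoc : (Fin.snoc b (-1) : Fin (n + 1) → ℝ)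
        = Fin.snoc b 0 - Pi.single (Fin.last n) 1 := by
      funext i
      refine Fin.lastCases ?_ (fun l => ?_) i
      · simp
      · simp [Fin.castSucc_ne_last]
    have h' : Fin.snoc a 0 + (powSumGraph k (n + 1)).mulVec (Fin.snoc b (-1)) = 0 := by
      rw [hsnoc, mulVec_sub, ← add_sub_assoc, h, mulVec_single_one]
      exact sub_self _
    exact neg_ne_zero.2 one_ne_zero (powSumGraph_snoc_add_eq_zero hn' hJ ha hb h').1
end

section
/- For every integer k ≥ 1, set N = {1,…,2k−1}. There exist a real symmetric (2k−1)×(2k−1) matrix G with zero diagonal and a vector c ∈ ℝ^{2k−1} such that: (i) for every J ⊆ N with |J| = k, the k×k matrix obtained by adjoining the column c_J to the k×(k−1) submatrix G_{J,N∖J} is invertible; and (ii) for every J' ⊆ N with |J'| = k−1, the rows of the (k−1)×k submatrix G_{J',N∖J'} are linearly independent. -/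
open Matrix Finset

/-- The `k × k` matrix `[G_{J,N∖J} ∣ c_J]` obtained by adjoining the column `c_J` to the
submatrix `G_{J,N∖J}`. -/
noncomputable def adjMat (k : ℕ) (G : Matrix (Fin (2 * k - 1)) (Fin (2 * k - 1)) ℝ)
    (c : Fin (2 * k - 1) → ℝ) (J : Finset (Fin (2 * k - 1))) :
    Matrix {x // x ∈ J} ({x // x ∈ Jᶜ} ⊕ Unit) ℝ :=
  Matrix.of fun j col =>
    match col with
    | Sum.inl i => G j.1 i.1
    | Sum.inr _ => c j.1

/-- The columns of a Cauchy matrix `((f i + g j)⁻¹)` with at least as many rows as columns are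
linearly independent. -/
theorem linearIndependent_cauchy_cols {K m n : Type*} [Field K] [Fintype m] [Fintype n]
    {f : m → K} {g : n → K} (hf : Function.Injective f) (hg : Function.Injective g)
    (hfg : ∀ i j, f i + g j ≠ 0) (hcard : Fintype.card n ≤ Fintype.card m) :
    LinearIndependent K (fun j i => (f i + g j)⁻¹) := by
  classical
  rw [Fintype.linearIndependent_iff]
  intro v hv j
  let p : Polynomial K := ∑ j, Polynomial.C (v j) *
    ∏ l ∈ univ.erase j, (Polynomial.X + Polynomial.C (g l))
  have hp : p = 0 := by
    refine Polynomial.eq_zero_of_natDegree_lt_card_of_eval_eq_zero p hf (fun i => ?_) ?_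
    · have hi : ∑ j, v j * (f i + g j)⁻¹ = 0 := by simpa using congrFun hv i
      have heval : p.eval (f i) = (∏ l, (f i + g l)) * ∑ j, v j * (f i + g j)⁻¹ := by
        simp only [p, Polynomial.eval_finsetSum, Polynomial.eval_mul, Polynomial.eval_C,
          Polynomial.eval_prod, Polynomial.eval_add, Polynomial.eval_X, mul_sum]
        refine sum_congr rfl fun j _ => ?_
        rw [← mul_prod_erase univ _ (mem_univ j)]
        field_simp [hfg i j]
      rw [heval, hi, mul_zero]
    · have hpos : 0 < Fintype.card n := Fintype.card_pos_iff.mpr ⟨j⟩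
      have hdeg : p.natDegree ≤ Fintype.card n - 1 := by
        refine Polynomial.natDegree_sum_le_of_forall_le _ _ fun j _ => ?_
        refine (Polynomial.natDegree_C_mul_le _ _).trans ?_
        refine (Polynomial.natDegree_prod_le _ _).trans ?_
        simp [card_erase_of_mem]
      omega
  have heval : p.eval (-g j) = v j * ∏ l ∈ univ.erase j, (-g j + g l) := by
    simp only [p, Polynomial.eval_finsetSum, Polynomial.eval_mul, Polynomial.eval_C,
      Polynomial.eval_prod, Polynomial.eval_add, Polynomial.eval_X]
    refine sum_eq_single_of_mem j (mem_univ j) fun l _ hl => ?_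
    rw [prod_eq_zero (mem_erase.mpr ⟨hl.symm, mem_univ j⟩) (neg_add_cancel _), mul_zero]
  rw [hp, Polynomial.eval_zero] at heval
  refine (mul_eq_zero.mp heval.symm).resolve_right (prod_ne_zero_iff.mpr fun l hl h => ?_)
  exact (mem_erase.mp hl).1 (hg (neg_add_eq_zero.mp h).symm)

/-- A matrix with as many rows as columns and linearly independent columns has a two-sided
inverse. -/
theorem exists_inverse_of_linearIndependent_cols {K m n : Type*} [Field K] [Fintype m] [Fintype n]
    [DecidableEq m] [DecidableEq n] {A : Matrix m n K} (hA : LinearIndependent K A.col)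
    (hcard : Fintype.card m = Fintype.card n) : ∃ B : Matrix n m K, A * B = 1 ∧ B * A = 1 := by
  have hsurj : Function.Surjective A.mulVecLin :=
    (LinearMap.injective_iff_surjective_of_finrank_eq_finrank (by simp [hcard])).mp
      (Matrix.mulVec_injective_iff.mpr hA)
  obtain ⟨B, hB⟩ := Matrix.mulVec_surjective_iff_exists_right_inverse.mp hsurj
  exact ⟨B, hB, (Matrix.mul_eq_one_comm_of_card_eq _ _ _ hcard).mp hB⟩

/-- For every integer `k ≥ 1`, with `N = {1,…,2k−1}`, there exist a real
symmetric `(2k−1) × (2k−1)` matrix `G` with zero diagonal and a vector `c ∈ ℝ^{2k−1}` such that: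
(i) for every `J ⊆ N` with `|J| = k`, the `k × k` matrix `[G_{J,N∖J} ∣ c_J]` is invertible; and
(ii) for every `J' ⊆ N` with `|J'| = k − 1`, the rows of the `(k−1) × k` submatrix
`G_{J',N∖J'}` are linearly independent. -/
theorem stmt17 (k : ℕ) (hk : 1 ≤ k) :
    ∃ (G : Matrix (Fin (2 * k - 1)) (Fin (2 * k - 1)) ℝ) (c : Fin (2 * k - 1) → ℝ),
      G.IsSymm ∧ (∀ i, G i i = 0) ∧
      (∀ J : Finset (Fin (2 * k - 1)), J.card = k →
        ∃ B : Matrix ({x // x ∈ Jᶜ} ⊕ Unit) {x // x ∈ J} ℝ,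
          adjMat k G c J * B = 1 ∧ B * adjMat k G c J = 1) ∧
      (∀ J' : Finset (Fin (2 * k - 1)), J'.card = k - 1 →
        LinearIndependent ℝ
          (fun j : {x // x ∈ J'} => fun i : {x // x ∈ J'ᶜ} => G j.1 i.1)) := by
  let x : Fin (2 * k - 1) → ℝ := fun i => (i : ℝ) + 1
  have hx : Function.Injective x := fun i j h => by
    simpa [x, Fin.ext_iff] using h
  have hpos : ∀ i, 0 < x i := fun i => by positivity
  refine ⟨Matrix.of fun i j => if i = j then 0 else (x i + x j)⁻¹, fun i => (x i)⁻¹,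
    ?_, by simp, fun J hJ => ?_, fun J hJ => ?_⟩
  · ext i j
    simp [eq_comm, add_comm]
  · have hcard : Fintype.card {i // i ∈ J} = Fintype.card ({i // i ∈ Jᶜ} ⊕ Unit) := by
      rw [Fintype.card_sum, Fintype.card_coe, Fintype.card_coe, card_compl, Fintype.card_fin,
        Fintype.card_unit]
      omega
    refine exists_inverse_of_linearIndependent_cols ?_ hcard
    convert linearIndependent_cauchy_cols (f := fun i : {i // i ∈ J} => x i)
      (g := Sum.elim (fun j : {j // j ∈ Jᶜ} => x j) fun _ : Unit => 0)
      (hx.comp Subtype.val_injective) ?_ ?_ hcard.ge using 1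
    · ext (j | j) i
      · have hij : i.1 ≠ j.1 := fun h => mem_compl.mp j.2 (h ▸ i.2)
        simp [adjMat, hij]
      · simp [adjMat]
    · exact (hx.comp Subtype.val_injective).sumElim (Function.injective_of_subsingleton _)
        fun j _ => (hpos j).ne'
    · rintro i (j | j)
      · exact (add_pos (hpos i) (hpos j)).ne'
      · simpa using (hpos i).ne'
  · have hcard : Fintype.card {i // i ∈ J} ≤ Fintype.card {i // i ∈ Jᶜ} := by
      rw [Fintype.card_coe, Fintype.card_coe, card_compl, Fintype.card_fin]
      omega
    convert linearIndependent_cauchy_cols (f := fun i : {i // i ∈ Jᶜ} => x i)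
      (g := fun j : {j // j ∈ J} => x j) (hx.comp Subtype.val_injective)
      (hx.comp Subtype.val_injective) (fun i j => (add_pos (hpos i) (hpos j)).ne') hcard using 1
    · ext j i
      have hij : j.1 ≠ i.1 := fun h => mem_compl.mp i.2 (h ▸ j.2)
      simp [hij, add_comm]
    · rfl
end
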